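/- arXiv:2410.14574 — 3 statements merged into one kernel-verified Lean document; each statement's English description precedes it below -/
import Mathlib

section
/- Let μ and s be real numbers with -1 < μ < 1 and 0 < s < 2 + 2μ. Then every real sequence (x_t)_{t≥0} satisfying the linear recurrence x_{t+2} = ((1+μ) - s)·x_{t+1} - μ·x_t for all t ≥ 0 converges to 0 as t → ∞. -/
open Filter

/-!
Write `a = 1 + μ - s`, so that the hypotheses become `|a| < 1 + μ` and `μ < 1`. The quadratic form
`(1 + μ) (‖u‖² + ‖v‖²) - 2 a ⟪u, v⟫` is then nonnegative, and along a solution it drops by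
`(1 - μ) ‖x (t + 2) - x t‖²` at each step. A nonincreasing sequence that is bounded below has drops
tending to `0`, hence `x (t + 2) - x t → 0`. Since `a ≠ ±(1 + μ)`, each `x t` is a fixed linear
combination of two consecutive such differences, so `x t → 0` as well.
-/

section Recurrence

open scoped Topology

theorem tendsto_sub_succ_nhds_zero_of_antitone {V : ℕ → ℝ} (hanti : Antitone V)
    (hbdd : BddBelow (Set.range V)) : Tendsto (fun t => V t - V (t + 1)) atTop (𝓝 0) := by
  have hlim := tendsto_atTop_ciInf hanti hbdd
  simpa only [sub_self] using hlim.sub ((tendsto_add_atTop_iff_nat 1).2 hlim)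

theorem smul_eq_of_recurrence {R M : Type*} [CommRing R] [AddCommGroup M] [Module R M] {a b : R}
    {x : ℕ → M} (hx : ∀ t, x (t + 2) = a • x (t + 1) - b • x t) (t : ℕ) :
    ((1 + b) ^ 2 - a ^ 2) • x t =
      (a ^ 2 - (1 + b)) • (x (t + 2) - x t) - a • (x (t + 3) - x (t + 1)) := by
  rw [hx (t + 1), hx t]
  module

theorem tendsto_zero_of_recurrence_of_tendsto_sub {𝕜 E : Type*} [Field 𝕜] [AddCommGroup E]
    [Module 𝕜 E] [TopologicalSpace E] [IsTopologicalAddGroup E] [ContinuousConstSMul 𝕜 E]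
    {a b : 𝕜} (hab : (1 + b) ^ 2 - a ^ 2 ≠ 0) {x : ℕ → E}
    (hx : ∀ t, x (t + 2) = a • x (t + 1) - b • x t)
    (hdiff : Tendsto (fun t => x (t + 2) - x t) atTop (𝓝 0)) : Tendsto x atTop (𝓝 0) := by
  have hdiff_succ : Tendsto (fun t => x (t + 3) - x (t + 1)) atTop (𝓝 0) :=
    hdiff.comp (tendsto_add_atTop_nat 1)
  have hcomb := (hdiff.const_smul (a ^ 2 - (1 + b))).sub (hdiff_succ.const_smul a)
  rw [smul_zero, smul_zero, sub_zero] at hcomb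
  rw [← tendsto_const_smul_iff₀ hab, smul_zero]
  simpa only [smul_eq_of_recurrence hx] using hcomb

variable {E : Type*} [NormedAddCommGroup E] [InnerProductSpace ℝ E] {a b : ℝ}

/-- The Lyapunov function of the recurrence `x (t + 2) = a • x (t + 1) - b • x t`, as a quadratic
form in two consecutive terms `u = x t` and `v = x (t + 1)`. -/
def recurrenceEnergy (a b : ℝ) (u v : E) : ℝ :=
  (1 + b) * (‖u‖ ^ 2 + ‖v‖ ^ 2) - 2 * a * inner ℝ u v

theorem recurrenceEnergy_eq_norm_add_norm_sub (a b : ℝ) (u v : E) :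
    recurrenceEnergy a b u v =
      ((1 + b - a) * ‖u + v‖ ^ 2 + (1 + b + a) * ‖u - v‖ ^ 2) / 2 := by
  rw [recurrenceEnergy, norm_add_sq_real, norm_sub_sq_real]
  ring

theorem recurrenceEnergy_nonneg (hab : |a| ≤ 1 + b) (u v : E) : 0 ≤ recurrenceEnergy a b u v := by
  obtain ⟨hneg, hpos⟩ := abs_le.1 hab
  have hadd : 0 ≤ (1 + b - a) * ‖u + v‖ ^ 2 := mul_nonneg (by linarith) (sq_nonneg _)
  have hsub : 0 ≤ (1 + b + a) * ‖u - v‖ ^ 2 := mul_nonneg (by linarith) (sq_nonneg _)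
  rw [recurrenceEnergy_eq_norm_add_norm_sub]
  exact div_nonneg (add_nonneg hadd hsub) zero_le_two

theorem recurrenceEnergy_sub_recurrenceEnergy (a b : ℝ) (u v : E) :
    recurrenceEnergy a b u v - recurrenceEnergy a b v (a • v - b • u) =
      (1 - b) * ‖a • v - b • u - u‖ ^ 2 := by
  have hcollect : a • v - b • u - u = a • v - (b + 1) • u := by module
  simp only [hcollect, recurrenceEnergy, norm_sub_sq_real, inner_sub_right, real_inner_smul_left,
    real_inner_smul_right, norm_smul, mul_pow, Real.norm_eq_abs, sq_abs,
    real_inner_self_eq_norm_sq, real_inner_comm u v]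
  ring

theorem tendsto_sub_nhds_zero_of_recurrence (hab : |a| ≤ 1 + b) (hb : b < 1) {x : ℕ → E}
    (hx : ∀ t, x (t + 2) = a • x (t + 1) - b • x t) :
    Tendsto (fun t => x (t + 2) - x t) atTop (𝓝 0) := by
  let V : ℕ → ℝ := fun t => recurrenceEnergy a b (x t) (x (t + 1))
  have h_one_sub : 0 < 1 - b := sub_pos.2 hb
  have hdrop (t : ℕ) : V t - V (t + 1) = (1 - b) * ‖x (t + 2) - x t‖ ^ 2 := by
    simpa only [← hx] using recurrenceEnergy_sub_recurrenceEnergy a b (x t) (x (t + 1))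
  have hanti : Antitone V := antitone_nat_of_succ_le fun t =>
    sub_nonneg.1 (by rw [hdrop]; positivity)
  have hbdd : BddBelow (Set.range V) :=
    ⟨0, Set.forall_mem_range.2 fun _ => recurrenceEnergy_nonneg hab _ _⟩
  have hdrop_lim : Tendsto (fun t => (1 - b) * ‖x (t + 2) - x t‖ ^ 2) atTop (𝓝 0) := by
    simpa only [hdrop] using tendsto_sub_succ_nhds_zero_of_antitone hanti hbdd
  have hsq : Tendsto (fun t => ‖x (t + 2) - x t‖ ^ 2) atTop (𝓝 0) := by
    simpa only [inv_mul_cancel_left₀ h_one_sub.ne', mul_zero] using hdrop_lim.const_mul (1 - b)⁻¹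
  rw [tendsto_zero_iff_norm_tendsto_zero]
  simpa only [Real.sqrt_sq (norm_nonneg _), Real.sqrt_zero] using hsq.sqrt

theorem stmt_3_general (hab : |a| < 1 + b) (hb : b < 1) {x : ℕ → E}
    (hx : ∀ t, x (t + 2) = a • x (t + 1) - b • x t) : Tendsto x atTop (𝓝 0) := by
  have hsq : a ^ 2 < (1 + b) ^ 2 := sq_lt_sq.2 (hab.trans_le (le_abs_self _))
  exact tendsto_zero_of_recurrence_of_tendsto_sub (sub_pos.2 hsq).ne' hx
    (tendsto_sub_nhds_zero_of_recurrence hab.le hb hx)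

end Recurrence

/-- Forward direction of Proposition 1: if `-1 < μ < 1` and `0 < s < 2 + 2μ`,
every real solution of `x_{t+2} = ((1+μ) - s)·x_{t+1} - μ·x_t` tends to `0`. -/
theorem stmt_3 (μ s : ℝ) (hμ : -1 < μ ∧ μ < 1) (hs : 0 < s ∧ s < 2 + 2 * μ)
    (x : ℕ → ℝ) (hx : ∀ t, x (t + 2) = ((1 + μ) - s) * x (t + 1) - μ * x t) :
    Tendsto x atTop (nhds 0) :=
  stmt_3_general (abs_lt.2 ⟨by linarith [hs.2], by linarith [hs.1]⟩) hμ.2 hx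
end

section
/- Let μ and s be real numbers such that it is not the case that both -1 < μ < 1 and 0 < s < 2 + 2μ. Then there exists a real sequence (x_t)_{t≥0} satisfying the linear recurrence x_{t+2} = ((1+μ) - s)·x_{t+1} - μ·x_t for all t ≥ 0 which does not converge to 0 as t → ∞. -/
/-!
A real root `r` of the characteristic polynomial `p` gives the solution `r ^ t`, and a complex root
`z` gives the solutions `Re (z ^ t)` and `Im (z ^ t)`, which cannot both tend to `0` if `1 ≤ ‖z‖`.
Here `p = X² - (1 + μ - s) X + μ`, so `p(1) = s`, `p(-1) = 2 + 2μ - s` and `p(0) = μ`. Outside the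
stability region one of `p(1) ≤ 0`, `p(-1) ≤ 0`, `1 ≤ p(0)` holds, because `p(1)` and `p(-1)` add
up to `2 + 2μ`. Each of them produces a root outside the open unit disc: a real root beyond `±1` by
the intermediate value theorem, or a root of modulus at least `1` since `p(0)` is the product of
the roots.
-/

open Filter

section RootLocation

open Polynomial

lemma exists_ge_isRoot_of_monic {p : ℝ[X]} (hp : p.Monic) {c : ℝ} (hc : p.eval c ≤ 0) :
    ∃ r, c ≤ r ∧ p.IsRoot r := by
  have hdeg : 0 < p.degree := by
    refine hp.degree_pos.2 fun h ↦ ?_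
    simp only [h, eval_one] at hc
    exact absurd hc (by norm_num)
  have htop : Tendsto (fun x ↦ p.eval x) atTop atTop :=
    p.tendsto_atTop_of_leadingCoeff_nonneg hdeg (hp.leadingCoeff ▸ zero_le_one)
  exact intermediate_value_Ici p.continuous.continuousOn htop hc

lemma exists_le_isRoot_of_monic {p : ℝ[X]} (hp : p.Monic) {c : ℝ}
    (hc : (-1) ^ p.natDegree * p.eval c ≤ 0) : ∃ r, r ≤ c ∧ p.IsRoot r := by
  obtain ⟨r, hcr, hr⟩ := exists_ge_isRoot_of_monic (c := -c)
    hp.neg_one_pow_natDegree_mul_comp_neg_X (by simpa using hc)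
  exact ⟨-r, neg_le.1 hcr, by simpa using hr⟩

lemma exists_isRoot_one_le_norm_of_monic {K : Type*} [NormedField K] [IsAlgClosed K] {p : K[X]}
    (hp : p.Monic) (hdeg : p.natDegree ≠ 0) (h0 : 1 ≤ ‖p.coeff 0‖) :
    ∃ z, p.IsRoot z ∧ 1 ≤ ‖z‖ := by
  by_contra! hroots
  have hsplits : p.Splits := IsAlgClosed.splits p
  have hne : p.roots ≠ ∅ := by
    rwa [hsplits.natDegree_eq_card_roots, Multiset.card_eq_zero.ne] at hdeg
  have hprod : ‖p.roots.prod‖ < 1 :=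
    Multiset.prod_induction_nonempty (‖·‖ < 1)
      (fun a b ha hb ↦ (norm_mul a b).trans_lt (mul_lt_one_of_nonneg_of_lt_one_left
        (norm_nonneg a) ha hb.le))
      hne fun z hz ↦ hroots z (isRoot_of_mem_roots hz)
  rw [hsplits.coeff_zero_eq_prod_roots_of_monic hp, norm_mul, norm_pow, norm_neg, norm_one,
    one_pow, one_mul] at h0
  exact h0.not_gt hprod

end RootLocation

section NonvanishingSolutions

open Polynomial

lemma isSolution_linearMap_pow {R A : Type*} [CommRing R] [Ring A] [Algebra R A]
    (E : LinearRecurrence R) {z : A} (hz : aeval z E.charPoly = 0) (φ : A →ₗ[R] R) :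
    E.IsSolution fun t ↦ φ (z ^ t) := by
  have hpow : z ^ E.order = ∑ i, E.coeffs i • z ^ (i : ℕ) := by
    simpa [LinearRecurrence.charPoly, aeval_monomial, sub_eq_zero, Algebra.smul_def] using hz
  intro t
  simp only [pow_add, hpow, Finset.mul_sum, mul_smul_comm, map_sum, map_smul, smul_eq_mul]

lemma tendsto_zero_of_tendsto_re_of_tendsto_im {ι : Type*} {l : Filter ι} {f : ι → ℂ}
    (hre : Tendsto (fun i ↦ (f i).re) l (nhds 0)) (him : Tendsto (fun i ↦ (f i).im) l (nhds 0)) :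
    Tendsto f l (nhds 0) :=
  squeeze_zero_norm (fun i ↦ Complex.norm_le_abs_re_add_abs_im (f i))
    (by simpa using hre.abs.add him.abs)

/-- Failure of asymptotic stability: some real solution of `E` does not tend to `0`. It may be
bounded or oscillate; divergence to infinity is not required. -/
def HasNonvanishingSolution (E : LinearRecurrence ℝ) : Prop :=
  ∃ x, E.IsSolution x ∧ ¬ Tendsto x atTop (nhds 0)

variable (E : LinearRecurrence ℝ)

lemma hasNonvanishingSolution_of_one_le_norm {z : ℂ} (hz : aeval z E.charPoly = 0)
    (hz_norm : 1 ≤ ‖z‖) : HasNonvanishingSolution E := by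
  by_contra h
  have hstable : ∀ x, E.IsSolution x → Tendsto x atTop (nhds 0) := by
    simpa [HasNonvanishingSolution] using h
  have hre := hstable _ (isSolution_linearMap_pow E hz Complex.reLm)
  have him := hstable _ (isSolution_linearMap_pow E hz Complex.imLm)
  have hpow : Tendsto (fun t ↦ z ^ t) atTop (nhds 0) :=
    tendsto_zero_of_tendsto_re_of_tendsto_im hre him
  exact hz_norm.not_gt (tendsto_pow_atTop_nhds_zero_iff_norm_lt_one.1 hpow)

lemma hasNonvanishingSolution_of_one_le_abs {r : ℝ} (hr : E.charPoly.IsRoot r)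
    (hr_abs : 1 ≤ |r|) : HasNonvanishingSolution E :=
  ⟨fun t ↦ r ^ t, (E.geom_sol_iff_root_charPoly r).2 hr, fun h ↦
    hr_abs.not_gt (tendsto_pow_atTop_nhds_zero_iff.1 h)⟩

lemma hasNonvanishingSolution_of_eval_one_nonpos (h : E.charPoly.eval 1 ≤ 0) :
    HasNonvanishingSolution E := by
  obtain ⟨r, hr, hroot⟩ := exists_ge_isRoot_of_monic E.charPoly_monic h
  exact hasNonvanishingSolution_of_one_le_abs E hroot (le_abs.2 (.inl hr))

lemma hasNonvanishingSolution_of_eval_neg_one_nonpos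
    (h : (-1) ^ E.order * E.charPoly.eval (-1) ≤ 0) : HasNonvanishingSolution E := by
  rw [← natDegree_eq_of_degree_eq_some E.charPoly_degree_eq_order] at h
  obtain ⟨r, hr, hroot⟩ := exists_le_isRoot_of_monic E.charPoly_monic h
  exact hasNonvanishingSolution_of_one_le_abs E hroot (le_abs.2 (.inr (le_neg.1 hr)))

lemma hasNonvanishingSolution_of_one_le_abs_coeff_zero (hE : E.order ≠ 0)
    (h : 1 ≤ |E.charPoly.coeff 0|) : HasNonvanishingSolution E := by
  obtain ⟨z, hroot, hz⟩ := exists_isRoot_one_le_norm_of_monic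
    (p := E.charPoly.map (algebraMap ℝ ℂ)) (E.charPoly_monic.map _)
    (by rwa [natDegree_map, natDegree_eq_of_degree_eq_some E.charPoly_degree_eq_order])
    (by simpa using h)
  exact hasNonvanishingSolution_of_one_le_norm E (by simpa [IsRoot.def] using hroot) hz

end NonvanishingSolutions

section Momentum

open Polynomial

/-- The recurrence `x (t + 2) = (1 + μ - s) * x (t + 1) - μ * x t` of gradient descent with
momentum `μ`, linearized along an eigendirection with effective step `s`. The coefficients are
listed from the oldest term to the newest. -/
def momentumRecurrence {R : Type*} [CommRing R] (μ s : R) : LinearRecurrence R :=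
  ⟨2, ![-μ, 1 + μ - s]⟩

variable {R : Type*} [CommRing R] (μ s : R)

lemma momentumRecurrence_isSolution_iff {x : ℕ → R} :
    (momentumRecurrence μ s).IsSolution x ↔
      ∀ t, x (t + 2) = (1 + μ - s) * x (t + 1) - μ * x t := by
  refine forall_congr' fun t ↦ ?_
  change x (t + 2) = ∑ i : Fin 2, ![-μ, 1 + μ - s] i * x (t + i) ↔ _
  simp [Fin.sum_univ_two, neg_add_eq_sub]

lemma charPoly_momentumRecurrence :
    (momentumRecurrence μ s).charPoly = X ^ 2 - C (1 + μ - s) * X + C μ := by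
  change monomial 2 1 - ∑ i : Fin 2, monomial (i : ℕ) (![-μ, 1 + μ - s] i) = _
  simp only [Fin.sum_univ_two, Fin.val_zero, Fin.val_one, Matrix.cons_val_zero, Matrix.cons_val_one,
    ← C_mul_X_pow_eq_monomial, map_one, map_neg, pow_zero, pow_one]
  ring

lemma eval_one_charPoly_momentumRecurrence :
    (momentumRecurrence μ s).charPoly.eval 1 = s := by
  simp only [charPoly_momentumRecurrence, eval_add, eval_sub, eval_mul, eval_pow, eval_X, eval_C]
  ring

lemma eval_neg_one_charPoly_momentumRecurrence :
    (momentumRecurrence μ s).charPoly.eval (-1) = 2 + 2 * μ - s := by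
  simp only [charPoly_momentumRecurrence, eval_add, eval_sub, eval_mul, eval_pow, eval_X, eval_C]
  ring

lemma coeff_zero_charPoly_momentumRecurrence :
    (momentumRecurrence μ s).charPoly.coeff 0 = μ := by
  simp [charPoly_momentumRecurrence]

end Momentum

/-- Converse direction of Proposition 1: if it is not the case that both
`-1 < μ < 1` and `0 < s < 2 + 2μ`, then the recurrence
`x_{t+2} = ((1+μ) - s)·x_{t+1} - μ·x_t` admits a real solution that does not
converge to `0`. -/
theorem stmt_4 (μ s : ℝ)
    (h : ¬ ((-1 < μ ∧ μ < 1) ∧ (0 < s ∧ s < 2 + 2 * μ))) :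
    ∃ x : ℕ → ℝ,
      (∀ t, x (t + 2) = ((1 + μ) - s) * x (t + 1) - μ * x t) ∧
      ¬ Tendsto x atTop (nhds 0) := by
  suffices HasNonvanishingSolution (momentumRecurrence μ s) by
    simpa only [HasNonvanishingSolution, momentumRecurrence_isSolution_iff] using this
  have hcases : s ≤ 0 ∨ 2 + 2 * μ - s ≤ 0 ∨ 1 ≤ μ := by grind
  rcases hcases with hs | hs | hμ
  · apply hasNonvanishingSolution_of_eval_one_nonpos
    rwa [eval_one_charPoly_momentumRecurrence]
  · apply hasNonvanishingSolution_of_eval_neg_one_nonpos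
    rwa [eval_neg_one_charPoly_momentumRecurrence, momentumRecurrence, neg_one_sq, one_mul]
  · apply hasNonvanishingSolution_of_one_le_abs_coeff_zero
    · exact two_ne_zero
    · rw [coeff_zero_charPoly_momentumRecurrence]
      exact le_abs.2 (.inl hμ)
end

section
/- Let μ and s be real numbers with s > 0 and μ ≥ (1 + √s)², where √ denotes the real square root. Then ((1+μ-s) + √((1+μ-s)² - 4μ)) / 2 > 1. (In particular, (1+μ-s)² - 4μ ≥ 0 and 1+μ-s ≥ 2 + 2√s under these hypotheses.) -/
/-!
The companion matrix has trace `1 + μ - s` and determinant `μ`. With `s = r ^ 2`, its discriminant,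
as a polynomial in `μ`, has the roots `(1 ± r) ^ 2`, so it is nonnegative once `μ` passes the larger
one. There the trace is at least `2 + 2 * r`, and the larger eigenvalue is at least half the trace.
-/

section OrderedCommRing

variable {R : Type*} [CommRing R] {r μ : R}

theorem sq_sub_four_mul_eq_mul_sub_sq (r μ : R) :
    (1 + μ - r ^ 2) ^ 2 - 4 * μ = (μ - (1 + r) ^ 2) * (μ - (1 - r) ^ 2) := by
  ring

theorem two_add_two_mul_le_one_add_sub_sq [PartialOrder R] [IsOrderedAddMonoid R]
    (hμ : (1 + r) ^ 2 ≤ μ) : 2 + 2 * r ≤ 1 + μ - r ^ 2 :=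
  calc
    2 + 2 * r = 1 + (1 + r) ^ 2 - r ^ 2 := by ring
    _ ≤ 1 + μ - r ^ 2 := by gcongr

theorem one_sub_sq_le_one_add_sq [PartialOrder R] [IsOrderedRing R] (hr : 0 ≤ r) :
    (1 - r) ^ 2 ≤ (1 + r) ^ 2 :=
  calc
    (1 - r) ^ 2 ≤ (1 - r) ^ 2 + 4 * r := le_add_of_nonneg_right (mul_nonneg zero_le_four hr)
    _ = (1 + r) ^ 2 := by ring

theorem sq_sub_four_mul_nonneg [PartialOrder R] [IsOrderedRing R] (hr : 0 ≤ r)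
    (hμ : (1 + r) ^ 2 ≤ μ) : 0 ≤ (1 + μ - r ^ 2) ^ 2 - 4 * μ := by
  rw [sq_sub_four_mul_eq_mul_sub_sq]
  exact mul_nonneg (sub_nonneg.2 hμ) (sub_nonneg.2 ((one_sub_sq_le_one_add_sq hr).trans hμ))

end OrderedCommRing

theorem half_le_half_add_sqrt (t d : ℝ) : t / 2 ≤ (t + Real.sqrt d) / 2 := by
  gcongr
  exact le_add_of_nonneg_right (Real.sqrt_nonneg d)

/-- Case 1a of the proof of Lemma 1: if `s > 0` and `μ ≥ (1 + √s)²`, then the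
larger eigenvalue `((1+μ-s) + √((1+μ-s)² - 4μ))/2` exceeds `1`; in particular
`(1+μ-s)² - 4μ ≥ 0` and `1+μ-s ≥ 2 + 2√s`. -/
theorem stmt_9 (μ s : ℝ) (hs : 0 < s) (hμ : (1 + Real.sqrt s) ^ 2 ≤ μ) :
    1 < ((1 + μ - s) + Real.sqrt ((1 + μ - s) ^ 2 - 4 * μ)) / 2 ∧
      0 ≤ (1 + μ - s) ^ 2 - 4 * μ ∧
      2 + 2 * Real.sqrt s ≤ 1 + μ - s := by
  have hr : 0 < Real.sqrt s := Real.sqrt_pos.2 hs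
  have trace_ge := two_add_two_mul_le_one_add_sub_sq hμ
  have discrim_nonneg := sq_sub_four_mul_nonneg hr.le hμ
  rw [Real.sq_sqrt hs.le] at trace_ge discrim_nonneg
  refine ⟨?_, discrim_nonneg, trace_ge⟩
  calc
    1 < (1 + μ - s) / 2 := by linarith
    _ ≤ _ := half_le_half_add_sqrt _ _
end
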